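/- Let H = Σᵢ(ωᵢuᵢ + xuᵢ²) + x³/3 + xy² + Σⱼ(pⱼ³/3 + pⱼqⱼ²), and Fⱼ = pⱼ³/3 + pⱼqⱼ² on ℝ^{n+2m+2} × 𝕋ⁿ. At every point at which (u, x, y) ≠ 0 in ℝ^{n+2} and (pⱼ, qⱼ) ≠ (0, 0) for every 1 ≤ j ≤ m, the differentials of the n + m + 1 functions H, u₁, …, uₙ, F₁, …, Fₘ are linearly independent. In particular, these first integrals are functionally independent almost everywhere (the exceptional set has Lebesgue measure zero). -/

import Mathlib

open Real

/-- The phase space ℳ = ℝ^{n+2m+2} × 𝕋ⁿ, represented with coordinates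
`(u, x, y, p, q, φ)` (the angles φ by their real lifts). -/
abbrev PhaseSpace (n m : ℕ) :=
  (Fin n → ℝ) × ℝ × ℝ × (Fin m → ℝ) × (Fin m → ℝ) × (Fin n → ℝ)

/-- The family of n + m + 1 first integrals
`H = Σᵢ(ωᵢuᵢ + xuᵢ²) + x³/3 + xy² + Σⱼ(pⱼ³/3 + pⱼqⱼ²)`, `uᵢ` (1 ≤ i ≤ n),
`Fⱼ = pⱼ³/3 + pⱼqⱼ²` (1 ≤ j ≤ m), as functions on ℳ. -/
noncomputable def integralFamily (n m : ℕ) (ω : Fin n → ℝ) :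
    Unit ⊕ Fin n ⊕ Fin m → PhaseSpace n m → ℝ
  | Sum.inl _ => fun z =>
      (∑ i, (ω i * z.1 i + z.2.1 * (z.1 i) ^ 2)) + z.2.1 ^ 3 / 3
        + z.2.1 * z.2.2.1 ^ 2
        + ∑ j, ((z.2.2.2.1 j) ^ 3 / 3 + z.2.2.2.1 j * (z.2.2.2.2.1 j) ^ 2)
  | Sum.inr (Sum.inl i) => fun z => z.1 i
  | Sum.inr (Sum.inr j) => fun z =>
      (z.2.2.2.1 j) ^ 3 / 3 + z.2.2.2.1 j * (z.2.2.2.2.1 j) ^ 2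

lemma fderiv_F (n m : ℕ) (ω : Fin n → ℝ) (j : Fin m) (z v : PhaseSpace n m) :
    fderiv ℝ (integralFamily n m ω (Sum.inr (Sum.inr j))) z v =
      (z.2.2.2.1 j ^ 2 + z.2.2.2.2.1 j ^ 2) * v.2.2.2.1 j
        + 2 * z.2.2.2.1 j * z.2.2.2.2.1 j * v.2.2.2.2.1 j := by
  have hd : DifferentiableAt ℝ (integralFamily n m ω (Sum.inr (Sum.inr j))) z := by
    unfold integralFamily
    fun_prop
  rw [← hd.lineDeriv_eq_fderiv]
  apply HasLineDerivAt.lineDeriv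
  unfold HasLineDerivAt integralFamily
  have hl : ∀ a b : ℝ, HasDerivAt (fun t : ℝ => a + t * b) b 0 := fun a b => by
    simpa using ((hasDerivAt_id (0 : ℝ)).mul_const b).const_add a
  simp only [Prod.fst_add, Prod.snd_add, Prod.smul_fst, Prod.smul_snd, Pi.add_apply,
    Pi.smul_apply, smul_eq_mul]
  convert (((hl (z.2.2.2.1 j) (v.2.2.2.1 j)).fun_pow 3).div_const 3).fun_add
    ((hl (z.2.2.2.1 j) (v.2.2.2.1 j)).fun_mul
      ((hl (z.2.2.2.2.1 j) (v.2.2.2.2.1 j)).fun_pow 2)) using 1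
  simp
  ring

lemma fderiv_u (n m : ℕ) (ω : Fin n → ℝ) (i : Fin n) (z v : PhaseSpace n m) :
    fderiv ℝ (integralFamily n m ω (Sum.inr (Sum.inl i))) z v = v.1 i := by
  have hd : DifferentiableAt ℝ (integralFamily n m ω (Sum.inr (Sum.inl i))) z := by
    unfold integralFamily
    fun_prop
  rw [← hd.lineDeriv_eq_fderiv]
  apply HasLineDerivAt.lineDeriv
  unfold HasLineDerivAt integralFamily
  simpa using ((hasDerivAt_id (0 : ℝ)).mul_const (v.1 i)).const_add (z.1 i)

lemma fderiv_H_x (n m : ℕ) (ω : Fin n → ℝ) (z : PhaseSpace n m) :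
    fderiv ℝ (integralFamily n m ω (Sum.inl ())) z (0, 1, 0, 0, 0, 0) =
      (∑ i, z.1 i ^ 2) + z.2.1 ^ 2 + z.2.2.1 ^ 2 := by
  have hd : DifferentiableAt ℝ (integralFamily n m ω (Sum.inl ())) z := by
    unfold integralFamily
    fun_prop
  rw [← hd.lineDeriv_eq_fderiv]
  apply HasLineDerivAt.lineDeriv
  unfold HasLineDerivAt integralFamily
  have hl : ∀ a : ℝ, HasDerivAt (fun t : ℝ => a + t) 1 0 := fun a => by
    simpa using (hasDerivAt_id (0 : ℝ)).const_add a
  simp only [Prod.fst_add, Prod.snd_add, Prod.smul_fst, Prod.smul_snd, Pi.add_apply,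
    Pi.smul_apply, smul_eq_mul, Pi.zero_apply, mul_zero, mul_one, add_zero]
  have h1 : HasDerivAt (fun t : ℝ => ∑ i, (ω i * z.1 i + (z.2.1 + t) * z.1 i ^ 2))
      (∑ i, 1 * z.1 i ^ 2) 0 :=
    HasDerivAt.fun_sum fun i _ => ((hl z.2.1).mul_const (z.1 i ^ 2)).const_add _
  convert ((h1.fun_add (((hl z.2.1).fun_pow 3).div_const 3)).fun_add
    ((hl z.2.1).mul_const (z.2.2.1 ^ 2))).add_const _ using 1
  simp

lemma haar_pi (k : ℕ) :
    (MeasureTheory.volume : MeasureTheory.Measure (Fin k → ℝ)).IsAddHaarMeasure :=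
  inferInstance

lemma haar_phase (n m : ℕ) :
    (MeasureTheory.volume : MeasureTheory.Measure (PhaseSpace n m)).IsAddHaarMeasure := by
  have h1 : (MeasureTheory.volume :
      MeasureTheory.Measure ((Fin m → ℝ) × (Fin n → ℝ))).IsAddHaarMeasure :=
    MeasureTheory.Measure.prod.instIsAddHaarMeasure _ _
  have h2 : (MeasureTheory.volume :
      MeasureTheory.Measure ((Fin m → ℝ) × (Fin m → ℝ) × (Fin n → ℝ))).IsAddHaarMeasure :=
    MeasureTheory.Measure.prod.instIsAddHaarMeasure _ _
  have h3 : (MeasureTheory.volume : MeasureTheory.Measure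
      (ℝ × (Fin m → ℝ) × (Fin m → ℝ) × (Fin n → ℝ))).IsAddHaarMeasure :=
    MeasureTheory.Measure.prod.instIsAddHaarMeasure _ _
  have h4 : (MeasureTheory.volume : MeasureTheory.Measure
      (ℝ × ℝ × (Fin m → ℝ) × (Fin m → ℝ) × (Fin n → ℝ))).IsAddHaarMeasure :=
    MeasureTheory.Measure.prod.instIsAddHaarMeasure _ _
  exact MeasureTheory.Measure.prod.instIsAddHaarMeasure _ _

lemma null_of_functional {n m : ℕ} (f : PhaseSpace n m →ₗ[ℝ] ℝ) (v : PhaseSpace n m)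
    (hv : f v ≠ 0) : MeasureTheory.volume {z : PhaseSpace n m | f z = 0} = 0 := by
  have := haar_phase n m
  have h := MeasureTheory.Measure.addHaar_submodule
    (MeasureTheory.volume : MeasureTheory.Measure (PhaseSpace n m)) (LinearMap.ker f) (by
      intro h
      exact hv (by simpa using (h ▸ Submodule.mem_top : v ∈ LinearMap.ker f)))
  exact h

/-- **Functional independence of the first integrals.** At every point
`z = (u, x, y, p, q, φ)` with `(u, x, y) ≠ 0` and `(pⱼ, qⱼ) ≠ (0, 0)` for every
`j`, the differentials of the n + m + 1 functions `H, u₁, …, uₙ, F₁, …, Fₘ` are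
linearly independent; and the exceptional set, where these conditions fail, has
Lebesgue measure zero. -/
theorem integrals_functionally_independent
    (n m : ℕ) (hn : 1 ≤ n) (ω : Fin n → ℝ) :
    (∀ z : PhaseSpace n m,
      ¬(z.1 = 0 ∧ z.2.1 = 0 ∧ z.2.2.1 = 0) →
      (∀ j : Fin m, (z.2.2.2.1 j, z.2.2.2.2.1 j) ≠ (0, 0)) →
      LinearIndependent ℝ
        (fun a : Unit ⊕ Fin n ⊕ Fin m => fderiv ℝ (integralFamily n m ω a) z)) ∧
    MeasureTheory.volume
      {z : PhaseSpace n m | (z.1 = 0 ∧ z.2.1 = 0 ∧ z.2.2.1 = 0) ∨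
        ∃ j : Fin m, (z.2.2.2.1 j, z.2.2.2.2.1 j) = (0, 0)} = 0 := by
  refine ⟨fun z hz hpq => ?_, ?_⟩
  · rw [Fintype.linearIndependent_iff]
    intro g hg
    have key : ∀ v : PhaseSpace n m,
        g (Sum.inl ()) * fderiv ℝ (integralFamily n m ω (Sum.inl ())) z v
        + (∑ i, g (Sum.inr (Sum.inl i)) * v.1 i
        + ∑ j, g (Sum.inr (Sum.inr j)) *
          ((z.2.2.2.1 j ^ 2 + z.2.2.2.2.1 j ^ 2) * v.2.2.2.1 j
            + 2 * z.2.2.2.1 j * z.2.2.2.2.1 j * v.2.2.2.2.1 j)) = 0 := by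
      intro v
      have := congrArg (fun L => L v) hg
      simpa [Fintype.sum_sum_type, sum_apply, fderiv_u, fderiv_F] using this
    have hH : g (Sum.inl ()) = 0 := by
      have h := key (0, 1, 0, 0, 0, 0)
      rw [fderiv_H_x] at h
      simp only [Pi.zero_apply, mul_zero, add_zero, Finset.sum_const_zero] at h
      rcases mul_eq_zero.1 h with h | h
      · exact h
      · exfalso
        have h0 : 0 ≤ ∑ i, z.1 i ^ 2 := Finset.sum_nonneg fun i _ => sq_nonneg _
        have hx := sq_nonneg z.2.1
        have hy := sq_nonneg z.2.2.1
        refine hz ⟨?_, pow_eq_zero_iff (two_ne_zero) |>.1 (by linarith),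
          pow_eq_zero_iff (two_ne_zero) |>.1 (by linarith)⟩
        have hs : ∑ i, z.1 i ^ 2 = 0 := by linarith
        rw [Finset.sum_eq_zero_iff_of_nonneg fun i _ => sq_nonneg _] at hs
        funext i
        exact pow_eq_zero_iff (two_ne_zero) |>.1 (hs i (Finset.mem_univ i))
    rintro (a | i | j)
    · exact hH
    · have h := key (Pi.single i 1, 0, 0, 0, 0, 0)
      simpa [hH, Pi.single_apply] using h
    · have h := key (0, 0, 0, Pi.single j 1, 0, 0)
      simp only [hH, zero_mul, Pi.zero_apply, mul_zero, add_zero, Finset.sum_const_zero,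
        zero_add, Pi.single_apply, mul_ite, mul_one, Finset.sum_ite_eq', Finset.sum_ite_eq,
        Finset.mem_univ, if_true] at h
      rcases mul_eq_zero.1 h with h | h
      · exact h
      · exfalso
        have hx := sq_nonneg (z.2.2.2.1 j)
        have hy := sq_nonneg (z.2.2.2.2.1 j)
        exact hpq j (Prod.ext (pow_eq_zero_iff (two_ne_zero) |>.1 (by linarith))
          (pow_eq_zero_iff (two_ne_zero) |>.1 (by linarith)))
  · let fx : PhaseSpace n m →ₗ[ℝ] ℝ := LinearMap.fst ℝ _ _ ∘ₗ LinearMap.snd ℝ _ _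
    let fp : Fin m → PhaseSpace n m →ₗ[ℝ] ℝ := fun j =>
      LinearMap.proj j ∘ₗ LinearMap.fst ℝ _ _ ∘ₗ LinearMap.snd ℝ _ _ ∘ₗ
        LinearMap.snd ℝ _ _ ∘ₗ LinearMap.snd ℝ _ _
    have h1 := null_of_functional fx (0, 1, 0, 0, 0, 0) (by simp [fx])
    have h2 : ∀ j, MeasureTheory.volume {z : PhaseSpace n m | fp j z = 0} = 0 := fun j =>
      null_of_functional (fp j) (0, 0, 0, Pi.single j 1, 0, 0) (by simp [fp])
    refine MeasureTheory.measure_mono_null ?_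
      (MeasureTheory.measure_union_null h1 (MeasureTheory.measure_iUnion_null h2))
    rintro z (h | ⟨j, h⟩)
    · exact Or.inl h.2.1
    · exact Or.inr (Set.mem_iUnion.2 ⟨j, (Prod.ext_iff.1 h).1⟩)
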